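/- arXiv:2501.00299 — 2 statements merged into one kernel-verified Lean document; each statement's English description precedes it below -/
import Mathlib

section
/- Let p > 1 and let α < 0 be a real number. Then for every finitely supported sequence u : ℕ → ℝ with u_0 = 0, ∑_{n=1}^∞ |u_n - u_{n-1}|^p n^α ≥ 2^{α-p} · ((p - 1 - α)/p)^p · ∑_{n=1}^∞ |u_n|^p n^{α-p}. -/
/-!
The proof is a discrete Picone (ground state) argument. For consecutive values `s < t` of a
nonnegative, strictly increasing sequence `g`,
`‖a - b‖ ^ p ≥ (t - s) ^ (p - 1) * (‖a‖ ^ p / t ^ (p - 1) - ‖b‖ ^ p / s ^ (p - 1))`, where `b = 0`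
if `s = 0`. After multiplication by the edge weights and summation by parts, every weight `V` with
`V * g ^ (p - 1) ≤ -Δ_p g`, where `Δ_p` is the weighted `p`-Laplacian, satisfies a Hardy inequality.

With `γ = (p - 1 - α) / p`, the continuous ground state `x ^ γ` is replaced by the sequence `g`
having increments `γ * n ^ (γ - 1)` exactly, which makes `-Δ_p g` an increment of
`-γ ^ (p - 1) * n ^ (-γ)`. By convexity of `x ^ (-γ)` and since `g n ≤ (n + 1) ^ γ`, this
yields the weight `γ ^ p * (n + 1) ^ (α - p)`, and `n + 1 ≤ 2 * n` costs the factor `2 ^ (α - p)`.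
-/

open Finset

section RpowIncrements

variable {r x : ℝ}

theorem convexOn_rpow_of_nonpos (hr : r ≤ 0) :
    ConvexOn ℝ (Set.Ioi 0) fun x : ℝ ↦ x ^ r := by
  refine MonotoneOn.convexOn_of_deriv (convex_Ioi 0)
    (fun x hx ↦ (Real.continuousAt_rpow_const x r (.inl (ne_of_gt hx))).continuousWithinAt)
    ?_ ?_
  · rw [interior_Ioi]
    exact fun x hx ↦ (Real.differentiableAt_rpow_const_of_ne r (ne_of_gt hx)).differentiableWithinAt
  · rw [interior_Ioi]
    intro x hx y _ hxy
    rw [Real.deriv_rpow_const, Real.deriv_rpow_const]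
    exact mul_le_mul_of_nonpos_left
      (Real.rpow_le_rpow_of_nonpos hx hxy (by linarith)) hr

theorem mul_rpow_sub_one_le_rpow_sub_rpow (hr : 1 ≤ r) (hx : 0 ≤ x) :
    r * x ^ (r - 1) ≤ (x + 1) ^ r - x ^ r := by
  simpa [slope_def_field] using (convexOn_rpow hr).le_slope_of_hasDerivAt (y := x + 1)
    hx (Set.mem_Ici.2 (by positivity)) (lt_add_one x) (Real.hasDerivAt_rpow_const (.inr hr))

theorem mul_add_one_rpow_sub_one_le_rpow_sub_rpow (hr₀ : 0 ≤ r) (hr₁ : r ≤ 1) (hx : 0 ≤ x) :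
    r * (x + 1) ^ (r - 1) ≤ (x + 1) ^ r - x ^ r := by
  have hx₁ : 0 < x + 1 := by positivity
  simpa [slope_def_field] using (Real.concaveOn_rpow hr₀ hr₁).le_slope_of_hasDerivAt (y := x + 1)
    hx hx₁.le (lt_add_one x) (Real.hasDerivAt_rpow_const (.inl hx₁.ne'))

theorem rpow_sub_rpow_le_mul_add_one_rpow_sub_one (hr : r ≤ 0) (hx : 0 < x) :
    (x + 1) ^ r - x ^ r ≤ r * (x + 1) ^ (r - 1) := by
  have hx₁ : 0 < x + 1 := by positivity
  simpa [slope_def_field] using (convexOn_rpow_of_nonpos hr).slope_le_of_hasDerivAt (y := x + 1)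
    hx hx₁ (lt_add_one x) (Real.hasDerivAt_rpow_const (.inl hx₁.ne'))

end RpowIncrements

section Picone

variable {E : Type*} [SeminormedAddCommGroup E] {p s t : ℝ}

theorem add_rpow_div_add_rpow_le {x y : ℝ} (hp : 1 ≤ p) (hx : 0 ≤ x) (hy : 0 ≤ y) (hs : 0 < s)
    (ht : 0 < t) :
    (x + y) ^ p / (s + t) ^ (p - 1) ≤ x ^ p / s ^ (p - 1) + y ^ p / t ^ (p - 1) := by
  have hst : 0 < s + t := add_pos hs ht
  have perspective {z c : ℝ} (hz : 0 ≤ z) (hc : 0 < c) :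
      z ^ p / c ^ (p - 1) = c * (z / c) ^ p := by
    rw [Real.div_rpow hz hc.le, Real.rpow_sub_one hc.ne']
    field_simp
  have jensen : ((x + y) / (s + t)) ^ p ≤
      s / (s + t) * (x / s) ^ p + t / (s + t) * (y / t) ^ p := by
    have average : (x + y) / (s + t) = s / (s + t) * (x / s) + t / (s + t) * (y / t) := by
      field_simp
    rw [average]
    exact (convexOn_rpow hp).2 (div_nonneg hx hs.le) (div_nonneg hy ht.le)
      (by positivity) (by positivity) (by field_simp)
  rw [perspective (add_nonneg hx hy) hst, perspective hx hs, perspective hy ht]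
  calc (s + t) * ((x + y) / (s + t)) ^ p
      ≤ (s + t) * (s / (s + t) * (x / s) ^ p + t / (s + t) * (y / t) ^ p) := by gcongr
    _ = s * (x / s) ^ p + t * (y / t) ^ p := by field_simp

theorem sub_rpow_mul_norm_rpow_div_sub_le (hp : 1 ≤ p) (hs : 0 ≤ s) (hst : s < t) {a b : E}
    (hb : s = 0 → b = 0) :
    (t - s) ^ (p - 1) * (‖a‖ ^ p / t ^ (p - 1) - ‖b‖ ^ p / s ^ (p - 1)) ≤ ‖a - b‖ ^ p := by
  have hp₀ : 0 < p := by linarith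
  obtain rfl | hs := hs.eq_or_lt
  · have : t ^ (p - 1) ≠ 0 := (Real.rpow_pos_of_pos hst _).ne'
    simp [hb rfl, Real.zero_rpow hp₀.ne', mul_div_cancel₀ _ this]
  have hts : 0 < t - s := sub_pos.2 hst
  have triangle : ‖a‖ ≤ ‖a - b‖ + ‖b‖ := by simpa using norm_add_le (a - b) b
  have radon : ‖a‖ ^ p / t ^ (p - 1) ≤
      ‖a - b‖ ^ p / (t - s) ^ (p - 1) + ‖b‖ ^ p / s ^ (p - 1) := by
    calc ‖a‖ ^ p / t ^ (p - 1) ≤ (‖a - b‖ + ‖b‖) ^ p / t ^ (p - 1) := by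
          have := hs.trans hst
          gcongr
      _ ≤ _ := by
          simpa using add_rpow_div_add_rpow_le hp (norm_nonneg (a - b)) (norm_nonneg b) hts hs
  rwa [← le_div_iff₀' (Real.rpow_pos_of_pos hts _), sub_le_iff_le_add]

/-- The flux of the `p`-Laplacian of `g` through the edge `{n, n + 1}` of weight `w n`, for
increasing `g`. At the vertex `n + 1` the weighted `p`-Laplacian is therefore
`-Δ_p g = pFlux p w g n - pFlux p w g (n + 1)`. -/
noncomputable def pFlux (p : ℝ) (w g : ℕ → ℝ) (n : ℕ) : ℝ :=
  w n * (g (n + 1) - g n) ^ (p - 1)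

variable {g w V : ℕ → ℝ} {u : ℕ → E}

theorem pFlux_nonneg (p : ℝ) (hg : Monotone g) (hw : ∀ n, 0 ≤ w n) (n : ℕ) : 0 ≤ pFlux p w g n :=
  mul_nonneg (hw n) (Real.rpow_nonneg (sub_nonneg.2 (hg n.le_succ)) _)

theorem pFlux_mul_norm_rpow_div_sub_le (hp : 1 ≤ p) (hg : StrictMono g) (hg₀ : 0 ≤ g 0)
    (hw : ∀ n, 0 ≤ w n) (hu₀ : u 0 = 0) (n : ℕ) :
    pFlux p w g n * (‖u (n + 1)‖ ^ p / g (n + 1) ^ (p - 1) - ‖u n‖ ^ p / g n ^ (p - 1)) ≤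
      ‖u (n + 1) - u n‖ ^ p * w n := by
  have hu_zero (h : g n = 0) : u n = 0 := by
    obtain rfl | hn := n.eq_zero_or_pos
    · exact hu₀
    · exact absurd h (hg₀.trans_lt (hg hn)).ne'
  rw [pFlux, mul_assoc, mul_comm _ (w n)]
  exact mul_le_mul_of_nonneg_left (sub_rpow_mul_norm_rpow_div_sub_le hp
    (hg₀.trans (hg.monotone n.zero_le)) (hg n.lt_succ_self) hu_zero) (hw n)

theorem sum_norm_rpow_mul_add_pFlux_mul_le (hp : 1 ≤ p) (hg : StrictMono g) (hg₀ : 0 ≤ g 0)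
    (hw : ∀ n, 0 ≤ w n)
    (hV : ∀ n, V n * g (n + 1) ^ (p - 1) ≤ pFlux p w g n - pFlux p w g (n + 1))
    (hu₀ : u 0 = 0) (N : ℕ) :
    ∑ n ∈ range N, ‖u (n + 1)‖ ^ p * V n + pFlux p w g N * (‖u N‖ ^ p / g N ^ (p - 1)) ≤
      ∑ n ∈ range N, ‖u (n + 1) - u n‖ ^ p * w n := by
  have supersolution (n : ℕ) : ‖u (n + 1)‖ ^ p * V n ≤
      (pFlux p w g n - pFlux p w g (n + 1)) * (‖u (n + 1)‖ ^ p / g (n + 1) ^ (p - 1)) := by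
    have : 0 < g (n + 1) ^ (p - 1) := Real.rpow_pos_of_pos (hg₀.trans_lt (hg n.succ_pos)) _
    calc ‖u (n + 1)‖ ^ p * V n
        = V n * g (n + 1) ^ (p - 1) * (‖u (n + 1)‖ ^ p / g (n + 1) ^ (p - 1)) := by field_simp
      _ ≤ (pFlux p w g n - pFlux p w g (n + 1)) * (‖u (n + 1)‖ ^ p / g (n + 1) ^ (p - 1)) := by
          gcongr
          exact hV n
  induction N with
  | zero => simp [hu₀, Real.zero_rpow (by linarith : p ≠ 0)]
  | succ N ih =>
    rw [sum_range_succ, sum_range_succ]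
    linarith [pFlux_mul_norm_rpow_div_sub_le hp hg hg₀ hw hu₀ N, supersolution N]

theorem sum_norm_rpow_mul_le_of_supersolution (hp : 1 ≤ p) (hg : StrictMono g) (hg₀ : 0 ≤ g 0)
    (hw : ∀ n, 0 ≤ w n)
    (hV : ∀ n, V n * g (n + 1) ^ (p - 1) ≤ pFlux p w g n - pFlux p w g (n + 1))
    (hu₀ : u 0 = 0) (N : ℕ) :
    ∑ n ∈ range N, ‖u (n + 1)‖ ^ p * V n ≤ ∑ n ∈ range N, ‖u (n + 1) - u n‖ ^ p * w n := by
  have boundary_nonneg : 0 ≤ pFlux p w g N * (‖u N‖ ^ p / g N ^ (p - 1)) :=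
    mul_nonneg (pFlux_nonneg p hg.monotone hw N) <| div_nonneg (by positivity) <|
      Real.rpow_nonneg (hg₀.trans (hg.monotone N.zero_le)) _
  exact (le_add_of_nonneg_right boundary_nonneg).trans
    (sum_norm_rpow_mul_add_pFlux_mul_le hp hg hg₀ hw hV hu₀ N)

end Picone

/-- The discrete analogue of `x ^ γ`: its increments are the values of the derivative
`γ * x ^ (γ - 1)` at the positive integers. -/
noncomputable def discreteRpow (γ : ℝ) (n : ℕ) : ℝ :=
  ∑ k ∈ range n, γ * ((k : ℝ) + 1) ^ (γ - 1)

namespace discreteRpow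

variable {γ : ℝ}

theorem zero (γ : ℝ) : discreteRpow γ 0 = 0 := sum_range_zero _

theorem succ_sub (γ : ℝ) (n : ℕ) :
    discreteRpow γ (n + 1) - discreteRpow γ n = γ * ((n : ℝ) + 1) ^ (γ - 1) :=
  sum_range_succ_sub_sum _

theorem strictMono (hγ : 0 < γ) : StrictMono (discreteRpow γ) :=
  strictMono_nat_of_lt_succ fun n ↦ sub_pos.1 <| by rw [succ_sub]; positivity

theorem le_add_one_rpow (hγ : 0 ≤ γ) (n : ℕ) : discreteRpow γ n ≤ ((n : ℝ) + 1) ^ γ := by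
  obtain hγ₁ | hγ₁ := le_total 1 γ
  · calc discreteRpow γ n
        ≤ ∑ k ∈ range n, ((((k + 1 : ℕ) : ℝ) + 1) ^ γ - ((k : ℝ) + 1) ^ γ) :=
          sum_le_sum fun k _ ↦ by
            push_cast
            exact mul_rpow_sub_one_le_rpow_sub_rpow hγ₁ (by positivity)
      _ = ((n : ℝ) + 1) ^ γ - 1 := by
          rw [sum_range_sub fun k : ℕ ↦ ((k : ℝ) + 1) ^ γ]
          simp
      _ ≤ ((n : ℝ) + 1) ^ γ := by linarith
  · calc discreteRpow γ n ≤ ∑ k ∈ range n, (((k + 1 : ℕ) : ℝ) ^ γ - (k : ℝ) ^ γ) :=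
          sum_le_sum fun k _ ↦ by
            push_cast
            exact mul_add_one_rpow_sub_one_le_rpow_sub_rpow hγ hγ₁ k.cast_nonneg
      _ = (n : ℝ) ^ γ - 0 ^ γ := by
          rw [sum_range_sub fun k : ℕ ↦ (k : ℝ) ^ γ, Nat.cast_zero]
      _ ≤ (n : ℝ) ^ γ := sub_le_self _ (Real.rpow_nonneg le_rfl _)
      _ ≤ ((n : ℝ) + 1) ^ γ := by gcongr; linarith

end discreteRpow

section PowerWeight

variable {p α γ : ℝ}

theorem pFlux_discreteRpow (hγ : 0 ≤ γ) (hγp : γ * p = p - 1 - α) (n : ℕ) :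
    pFlux p (fun k ↦ ((k : ℝ) + 1) ^ α) (discreteRpow γ) n =
      γ ^ (p - 1) * ((n : ℝ) + 1) ^ (-γ) := by
  have hn : (0 : ℝ) < (n : ℝ) + 1 := by positivity
  rw [pFlux, discreteRpow.succ_sub, Real.mul_rpow hγ (by positivity), ← Real.rpow_mul hn.le,
    mul_left_comm, ← Real.rpow_add hn]
  congr 2
  linarith

theorem discreteRpow_supersolution (hp : 1 ≤ p) (hγ : 0 < γ) (hγp : γ * p = p - 1 - α) (n : ℕ) :
    γ ^ p * ((n : ℝ) + 2) ^ (α - p) * discreteRpow γ (n + 1) ^ (p - 1) ≤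
      pFlux p (fun k ↦ ((k : ℝ) + 1) ^ α) (discreteRpow γ) n -
        pFlux p (fun k ↦ ((k : ℝ) + 1) ^ α) (discreteRpow γ) (n + 1) := by
  have hn : (0 : ℝ) < (n : ℝ) + 2 := by positivity
  have profile_nonneg : 0 ≤ discreteRpow γ (n + 1) :=
    (discreteRpow.zero γ).ge.trans ((discreteRpow.strictMono hγ).monotone (n + 1).zero_le)
  have profile_le : discreteRpow γ (n + 1) ≤ ((n : ℝ) + 2) ^ γ := by
    convert discreteRpow.le_add_one_rpow hγ.le (n + 1) using 2
    push_cast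
    ring
  have increment : γ * ((n : ℝ) + 2) ^ (-γ - 1) ≤ ((n : ℝ) + 1) ^ (-γ) - ((n : ℝ) + 2) ^ (-γ) := by
    have := rpow_sub_rpow_le_mul_add_one_rpow_sub_one (neg_nonpos.2 hγ.le)
      (by positivity : (0 : ℝ) < n + 1)
    rw [add_assoc, one_add_one_eq_two] at this
    linarith
  calc γ ^ p * ((n : ℝ) + 2) ^ (α - p) * discreteRpow γ (n + 1) ^ (p - 1)
      ≤ γ ^ p * ((n : ℝ) + 2) ^ (α - p) * (((n : ℝ) + 2) ^ γ) ^ (p - 1) := by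
        have : 0 ≤ p - 1 := sub_nonneg.2 hp
        gcongr
    _ = γ ^ p * ((n : ℝ) + 2) ^ (-γ - 1) := by
        rw [← Real.rpow_mul hn.le, mul_assoc, ← Real.rpow_add hn]
        congr 2
        linarith
    _ = γ ^ (p - 1) * (γ * ((n : ℝ) + 2) ^ (-γ - 1)) := by
        rw [Real.rpow_sub_one hγ.ne']
        field_simp
    _ ≤ γ ^ (p - 1) * (((n : ℝ) + 1) ^ (-γ) - ((n : ℝ) + 2) ^ (-γ)) := by gcongr
    _ = _ := by
        rw [pFlux_discreteRpow hγ.le hγp, pFlux_discreteRpow hγ.le hγp, mul_sub, Nat.cast_succ,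
          add_assoc (n : ℝ), one_add_one_eq_two]

variable {E : Type*} [SeminormedAddCommGroup E] {u : ℕ → E}

theorem sum_norm_rpow_mul_shifted_le (hp : 1 ≤ p) (hα : α < p - 1) (hu₀ : u 0 = 0) (N : ℕ) :
    ((p - 1 - α) / p) ^ p * ∑ n ∈ range N, ‖u (n + 1)‖ ^ p * ((n : ℝ) + 2) ^ (α - p) ≤
      ∑ n ∈ range N, ‖u (n + 1) - u n‖ ^ p * ((n : ℝ) + 1) ^ α := by
  set γ := (p - 1 - α) / p
  have hγ : 0 < γ := div_pos (by linarith) (by linarith)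
  have hγp : γ * p = p - 1 - α := div_mul_cancel₀ _ (by linarith)
  have hardy := sum_norm_rpow_mul_le_of_supersolution hp (discreteRpow.strictMono hγ)
    (discreteRpow.zero γ).ge (fun n ↦ by positivity) (discreteRpow_supersolution hp hγ hγp) hu₀ N
  simpa only [mul_sum, mul_left_comm] using hardy

theorem two_rpow_mul_sum_norm_rpow_mul_le (hp : 1 ≤ p) (hα : α < p - 1) (hu₀ : u 0 = 0) (N : ℕ) :
    2 ^ (α - p) * ((p - 1 - α) / p) ^ p *
        ∑ n ∈ range N, ‖u (n + 1)‖ ^ p * ((n : ℝ) + 1) ^ (α - p) ≤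
      ∑ n ∈ range N, ‖u (n + 1) - u n‖ ^ p * ((n : ℝ) + 1) ^ α := by
  have weight_le (n : ℕ) : 2 ^ (α - p) * ((n : ℝ) + 1) ^ (α - p) ≤ ((n : ℝ) + 2) ^ (α - p) := by
    rw [← Real.mul_rpow zero_le_two (by positivity)]
    exact Real.rpow_le_rpow_of_nonpos (by positivity) (by linarith [n.cast_nonneg (α := ℝ)])
      (by linarith)
  have : 0 ≤ (p - 1 - α) / p := div_nonneg (by linarith) (by linarith)
  calc 2 ^ (α - p) * ((p - 1 - α) / p) ^ p *
        ∑ n ∈ range N, ‖u (n + 1)‖ ^ p * ((n : ℝ) + 1) ^ (α - p)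
      = ((p - 1 - α) / p) ^ p *
        ∑ n ∈ range N, ‖u (n + 1)‖ ^ p * (2 ^ (α - p) * ((n : ℝ) + 1) ^ (α - p)) := by
        rw [mul_right_comm, mul_comm, mul_sum]
        simp only [mul_left_comm]
    _ ≤ ((p - 1 - α) / p) ^ p * ∑ n ∈ range N, ‖u (n + 1)‖ ^ p * ((n : ℝ) + 2) ^ (α - p) := by
        gcongr with n
        exact weight_le n
    _ ≤ _ := sum_norm_rpow_mul_shifted_le hp hα hu₀ N

theorem summable_norm_sub_rpow_mul_of_finite_support (hp : p ≠ 0)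
    (hu : (Function.support u).Finite) (w : ℕ → ℝ) :
    Summable fun n ↦ ‖u (n + 1) - u n‖ ^ p * w n := by
  refine summable_of_hasFiniteSupport <| Set.Finite.subset
    ((hu.preimage (add_left_injective 1).injOn).union hu) fun n hn ↦ ?_
  by_contra h
  obtain ⟨hsucc, hn₀⟩ : u (n + 1) = 0 ∧ u n = 0 := by simpa [not_or] using h
  exact hn (by simp [hsucc, hn₀, Real.zero_rpow hp])

theorem stmt_16_general (hp : 1 ≤ p) (hα : α < p - 1) (hu₀ : u 0 = 0)
    (hu : Summable fun n : ℕ ↦ ‖u (n + 1) - u n‖ ^ p * ((n : ℝ) + 1) ^ α) :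
    (Summable fun n : ℕ ↦ ‖u (n + 1)‖ ^ p * ((n : ℝ) + 1) ^ (α - p)) ∧
      2 ^ (α - p) * ((p - 1 - α) / p) ^ p *
          ∑' n : ℕ, ‖u (n + 1)‖ ^ p * ((n : ℝ) + 1) ^ (α - p) ≤
        ∑' n : ℕ, ‖u (n + 1) - u n‖ ^ p * ((n : ℝ) + 1) ^ α := by
  have hC : 0 < 2 ^ (α - p) * ((p - 1 - α) / p) ^ p :=
    mul_pos (by positivity) (Real.rpow_pos_of_pos (div_pos (by linarith) (by linarith)) p)
  have nonneg (n : ℕ) : 0 ≤ ‖u (n + 1)‖ ^ p * ((n : ℝ) + 1) ^ (α - p) := by positivity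
  have partial_sum_le (N : ℕ) :
      ∑ n ∈ range N, ‖u (n + 1)‖ ^ p * ((n : ℝ) + 1) ^ (α - p) ≤
        (∑' n : ℕ, ‖u (n + 1) - u n‖ ^ p * ((n : ℝ) + 1) ^ α) /
          (2 ^ (α - p) * ((p - 1 - α) / p) ^ p) :=
    (le_div_iff₀' hC).2 <| (two_rpow_mul_sum_norm_rpow_mul_le hp hα hu₀ N).trans <|
      hu.sum_le_tsum _ fun n _ ↦ by positivity
  exact ⟨summable_of_sum_range_le nonneg partial_sum_le,
    (le_div_iff₀' hC).1 (Real.tsum_le_of_sum_range_le nonneg partial_sum_le)⟩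

end PowerWeight

/-- Proposition 4.8 (lower bound): for `p > 1` and `α < 0`, the discrete weighted
`p`-Hardy inequality holds with constant `2^{α-p} ((p-1-α)/p)^p`. -/
theorem stmt_16 (p α : ℝ) (hp : 1 < p) (hα : α < 0) :
    ∀ u : ℕ → ℝ, (Function.support u).Finite → u 0 = 0 →
      ∑' n : ℕ, |u (n + 1) - u n| ^ p * ((n : ℝ) + 1) ^ α ≥
        (2 : ℝ) ^ (α - p) * ((p - 1 - α) / p) ^ p *
          ∑' n : ℕ, |u (n + 1)| ^ p * ((n : ℝ) + 1) ^ (α - p) :=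
  fun _ hu hu₀ ↦ (stmt_16_general hp.le (by linarith) hu₀
    (summable_norm_sub_rpow_mul_of_finite_support (by linarith) hu _)).2
end

section
/- Let p > 1 and let α < 0 be a real number. If C > 0 is a constant such that ∑_{n=1}^∞ |u_n - u_{n-1}|^p n^α ≥ C · ∑_{n=1}^∞ |u_n|^p n^{α-p} holds for every finitely supported sequence u : ℕ → ℝ with u_0 = 0, then C ≤ ((p - 1 - α)/p)^p. That is, the sharp discrete constant is at most the sharp continuous constant ((p-1-α)/p)^p. -/
/-!
With `s = -(1 + α) / p`, the sequence `n * n ^ s = n ^ ((p - 1 - α) / p)` is the virtual extremizer: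
its weighted terms on the right are exactly `1 / n`, while those on the left are `|r n| ^ p / n`
with `r n → s + 1 = (p - 1 - α) / p`. Descending linearly to zero between `N` and `2 * N` makes the
support finite at a cost bounded independently of `N`. As the harmonic series diverges, the ratio
of the two sides tends to `|s + 1| ^ p`, which therefore bounds every admissible constant.
-/

open Filter Finset Topology

lemma tendsto_sum_mul_div_sum {a w : ℕ → ℝ} {L : ℝ} (hw : ∀ n, 0 ≤ w n)
    (hsum : Tendsto (fun N ↦ ∑ n ∈ range N, w n) atTop atTop) (ha : Tendsto a atTop (𝓝 L)) :
    Tendsto (fun N ↦ (∑ n ∈ range N, a n * w n) / ∑ n ∈ range N, w n) atTop (𝓝 L) := by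
  have hsmall : (fun n ↦ (a n - L) * w n) =o[atTop] w := by
    have hdiff : (fun n ↦ a n - L) =o[atTop] (fun _ ↦ (1 : ℝ)) :=
      (Asymptotics.isLittleO_one_iff ℝ).2 (tendsto_sub_nhds_zero_iff.2 ha)
    simpa only [one_mul] using hdiff.mul_isBigO (Asymptotics.isBigO_refl w atTop)
  have hlim := ((hsmall.sum_range hw hsum).tendsto_div_nhds_zero).add_const L
  rw [zero_add] at hlim
  refine hlim.congr' ?_
  filter_upwards [hsum.eventually_gt_atTop 0] with N hN
  simp only [sub_mul, sum_sub_distrib, ← mul_sum]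
  field_simp
  ring

lemma rpow_le_rpow_abs_mul_rpow {c x y : ℝ} (hx : 0 < x) (hxy : x ≤ y) (hyc : y ≤ c * x) (r : ℝ) :
    y ^ r ≤ c ^ |r| * x ^ r := by
  have hy : 0 < y := hx.trans_le hxy
  rw [← div_le_iff₀ (Real.rpow_pos_of_pos hx r), ← Real.div_rpow hy.le hx.le]
  calc (y / x) ^ r ≤ (y / x) ^ |r| :=
        Real.rpow_le_rpow_of_exponent_le ((one_le_div hx).2 hxy) (le_abs_self r)
    _ ≤ c ^ |r| := by
        gcongr
        exact (div_le_iff₀ hx).2 hyc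

lemma tendsto_rpow_sub_rpow_sub_one_div (r : ℝ) :
    Tendsto (fun x : ℝ ↦ (x ^ r - (x - 1) ^ r) / x ^ (r - 1)) atTop (𝓝 r) := by
  have hderiv : HasDerivAt (fun t : ℝ ↦ t ^ r) r 1 := by
    simpa using Real.hasDerivAt_rpow_const (x := 1) (p := r) (Or.inl one_ne_zero)
  have hpath : Tendsto (fun x : ℝ ↦ -x⁻¹) atTop (𝓝[≠] 0) := by
    refine tendsto_nhdsWithin_iff.2 ⟨by simpa using (tendsto_inv_atTop_zero (𝕜 := ℝ)).neg, ?_⟩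
    filter_upwards [eventually_gt_atTop 0] with x hx
    simpa using hx.ne'
  refine ((hasDerivAt_iff_tendsto_slope_zero.1 hderiv).comp hpath).congr' ?_
  filter_upwards [eventually_ge_atTop 1] with x hx
  have hx0 : 0 < x := one_pos.trans_le hx
  have hscale : (1 + -x⁻¹) ^ r = (x - 1) ^ r / x ^ r := by
    rw [← Real.div_rpow (sub_nonneg.2 hx) hx0.le]
    congr 1
    field_simp
    ring
  have hxr : x ^ r ≠ 0 := (Real.rpow_pos_of_pos hx0 r).ne'
  simp only [Function.comp_apply, hscale, Real.one_rpow, smul_eq_mul, Real.rpow_sub_one hx0.ne']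
  field_simp
  ring

/-- The increment of the discrete power `n ↦ n * n ^ s` from `n` to `n + 1`, relative to
`(n + 1) ^ s`. Writing `n * n ^ s` for `n ^ (s + 1)` makes the value at `n = 0` vanish also for
`s = -1`, where `0 ^ (s + 1) = 1`. -/
noncomputable def relPowerIncrement (s : ℝ) (n : ℕ) : ℝ :=
  (((n : ℝ) + 1) * ((n : ℝ) + 1) ^ s - n * (n : ℝ) ^ s) / ((n : ℝ) + 1) ^ s

lemma tendsto_relPowerIncrement (s : ℝ) :
    Tendsto (relPowerIncrement s) atTop (𝓝 (s + 1)) := by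
  have hcast : Tendsto (fun n : ℕ ↦ (n : ℝ) + 1) atTop atTop :=
    tendsto_atTop_add_const_right _ _ tendsto_natCast_atTop_atTop
  refine ((tendsto_rpow_sub_rpow_sub_one_div (s + 1)).comp hcast).congr' ?_
  filter_upwards [eventually_gt_atTop 0] with n hn
  have hn0 : (n : ℝ) ≠ 0 := by exact_mod_cast hn.ne'
  have hn1 : (n : ℝ) + 1 ≠ 0 := n.cast_add_one_ne_zero
  simp only [Function.comp_apply, relPowerIncrement, add_sub_cancel_right,
    Real.rpow_add_one hn0, Real.rpow_add_one hn1, mul_comm]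

lemma tendsto_sum_relPowerIncrement_rpow_div_harmonic {p : ℝ} (hp : 0 ≤ p) (s : ℝ) :
    Tendsto (fun N : ℕ ↦ (∑ n ∈ range N, |relPowerIncrement s n| ^ p * (1 / ((n : ℝ) + 1))) /
      ∑ n ∈ range N, 1 / ((n : ℝ) + 1)) atTop (𝓝 (|s + 1| ^ p)) :=
  tendsto_sum_mul_div_sum (fun _ ↦ by positivity) Real.tendsto_sum_range_one_div_nat_succ_atTop
    ((tendsto_relPowerIncrement s).abs.rpow_const (Or.inr hp))

/-- The test sequence for Hardy's inequality: `n * n ^ s` up to `n = N`, then linear down to the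
value `0`, taken from `n = 2 * N` on (where the truncated subtraction `2 * N - n` is `0`). -/
noncomputable def truncatedPower (s : ℝ) (N n : ℕ) : ℝ :=
  (min n (2 * N - n) : ℕ) * ((min n N : ℕ) : ℝ) ^ s

section TruncatedPower

variable {s p α : ℝ} {N n : ℕ}

lemma truncatedPower_zero_right (s : ℝ) (N : ℕ) : truncatedPower s N 0 = 0 := by
  simp [truncatedPower]

lemma truncatedPower_of_le (h : n ≤ N) : truncatedPower s N n = n * (n : ℝ) ^ s := by
  rw [truncatedPower, min_eq_left h, min_eq_left (by omega)]

lemma truncatedPower_of_ge (h : N ≤ n) :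
    truncatedPower s N n = (2 * N - n : ℕ) * (N : ℝ) ^ s := by
  rw [truncatedPower, min_eq_right h, min_eq_right (by omega)]

lemma truncatedPower_eq_zero (h : 2 * N ≤ n) : truncatedPower s N n = 0 := by
  rw [truncatedPower_of_ge (by omega), Nat.sub_eq_zero_of_le h, Nat.cast_zero, zero_mul]

lemma finite_support_truncatedPower (s : ℝ) (N : ℕ) :
    (Function.support (truncatedPower s N)).Finite :=
  (Set.finite_Iio (2 * N)).subset fun _ hn ↦
    not_le.1 fun hle ↦ hn (truncatedPower_eq_zero hle)

lemma abs_truncatedPower_succ_rpow_mul_rpow (hs : s * p + α = -1) (h : n < N) :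
    |truncatedPower s N (n + 1)| ^ p * ((n : ℝ) + 1) ^ (α - p) = 1 / ((n : ℝ) + 1) := by
  have hn : 0 < (n : ℝ) + 1 := n.cast_add_one_pos
  rw [truncatedPower_of_le h, Nat.cast_add_one, abs_of_nonneg (by positivity),
    Real.mul_rpow hn.le (by positivity), ← Real.rpow_mul hn.le, ← Real.rpow_add hn,
    ← Real.rpow_add hn, show p + s * p + (α - p) = -1 by linarith, Real.rpow_neg_one, one_div]

lemma abs_truncatedPower_succ_sub_rpow_mul_rpow_of_lt (hs : s * p + α = -1) (h : n < N) :
    |truncatedPower s N (n + 1) - truncatedPower s N n| ^ p * ((n : ℝ) + 1) ^ α =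
      |relPowerIncrement s n| ^ p * (1 / ((n : ℝ) + 1)) := by
  have hn : 0 < (n : ℝ) + 1 := n.cast_add_one_pos
  have hweight : (((n : ℝ) + 1) ^ s) ^ p * ((n : ℝ) + 1) ^ α = 1 / ((n : ℝ) + 1) := by
    rw [← Real.rpow_mul hn.le, ← Real.rpow_add hn, hs, Real.rpow_neg_one, one_div]
  have hincr : truncatedPower s N (n + 1) - truncatedPower s N n =
      relPowerIncrement s n * ((n : ℝ) + 1) ^ s := by
    rw [truncatedPower_of_le h, truncatedPower_of_le h.le, relPowerIncrement, Nat.cast_add_one,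
      div_mul_cancel₀ _ (Real.rpow_pos_of_pos hn s).ne']
  rw [hincr, abs_mul, abs_of_pos (Real.rpow_pos_of_pos hn s),
    Real.mul_rpow (abs_nonneg _) (by positivity), mul_assoc, hweight]

lemma abs_truncatedPower_succ_sub_rpow_mul_rpow_le_of_ge (hs : s * p + α = -1)
    (hN : N ≤ n) (h2N : n < 2 * N) :
    |truncatedPower s N (n + 1) - truncatedPower s N n| ^ p * ((n : ℝ) + 1) ^ α ≤
      2 ^ |α| / N := by
  have hN0 : 0 < (N : ℝ) := by exact_mod_cast (by omega : 0 < N)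
  have hincr : truncatedPower s N (n + 1) - truncatedPower s N n = -(N : ℝ) ^ s := by
    rw [truncatedPower_of_ge (by omega), truncatedPower_of_ge hN, Nat.cast_sub h2N,
      Nat.cast_sub h2N.le]
    push_cast
    ring
  have hweight : ((n : ℝ) + 1) ^ α ≤ 2 ^ |α| * (N : ℝ) ^ α :=
    rpow_le_rpow_abs_mul_rpow hN0 (by exact_mod_cast (by omega : N ≤ n + 1))
      (by exact_mod_cast h2N) α
  calc |truncatedPower s N (n + 1) - truncatedPower s N n| ^ p * ((n : ℝ) + 1) ^ α
      = (N : ℝ) ^ (s * p) * ((n : ℝ) + 1) ^ α := by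
        rw [hincr, abs_neg, abs_of_nonneg (by positivity), ← Real.rpow_mul hN0.le]
    _ ≤ (N : ℝ) ^ (s * p) * (2 ^ |α| * (N : ℝ) ^ α) := by gcongr
    _ = 2 ^ |α| / N := by
        rw [mul_left_comm, ← Real.rpow_add hN0, hs, Real.rpow_neg_one, div_eq_mul_inv]

lemma harmonic_le_tsum_abs_truncatedPower_rpow (hp : 0 < p) (hs : s * p + α = -1) (N : ℕ) :
    ∑ n ∈ range N, 1 / ((n : ℝ) + 1) ≤
      ∑' n : ℕ, |truncatedPower s N (n + 1)| ^ p * ((n : ℝ) + 1) ^ (α - p) := by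
  have hsummable : Summable fun n : ℕ ↦
      |truncatedPower s N (n + 1)| ^ p * ((n : ℝ) + 1) ^ (α - p) := by
    refine summable_of_ne_finset_zero (s := range (2 * N)) fun n hn ↦ ?_
    rw [mem_range, not_lt] at hn
    rw [truncatedPower_eq_zero (by omega), abs_zero, Real.zero_rpow hp.ne', zero_mul]
  calc ∑ n ∈ range N, 1 / ((n : ℝ) + 1)
      = ∑ n ∈ range N, |truncatedPower s N (n + 1)| ^ p * ((n : ℝ) + 1) ^ (α - p) :=
        sum_congr rfl fun _ hn ↦ (abs_truncatedPower_succ_rpow_mul_rpow hs (mem_range.1 hn)).symm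
    _ ≤ _ := hsummable.sum_le_tsum _ fun _ _ ↦ by positivity

lemma tsum_abs_truncatedPower_sub_rpow_le (hp : 0 < p) (hs : s * p + α = -1) (N : ℕ) :
    ∑' n : ℕ, |truncatedPower s N (n + 1) - truncatedPower s N n| ^ p * ((n : ℝ) + 1) ^ α ≤
      ∑ n ∈ range N, |relPowerIncrement s n| ^ p * (1 / ((n : ℝ) + 1)) + 2 ^ |α| := by
  rw [tsum_eq_sum (s := range (2 * N)), ← sum_range_add_sum_Ico _ (by omega : N ≤ 2 * N)]
  · gcongr ?_ + ?_
    · exact (sum_congr rfl fun n hn ↦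
        abs_truncatedPower_succ_sub_rpow_mul_rpow_of_lt hs (mem_range.1 hn)).le
    · calc ∑ n ∈ Ico N (2 * N),
            |truncatedPower s N (n + 1) - truncatedPower s N n| ^ p * ((n : ℝ) + 1) ^ α
          ≤ ∑ _n ∈ Ico N (2 * N), 2 ^ |α| / (N : ℝ) := by
            gcongr with n hn
            obtain ⟨hN, h2N⟩ := mem_Ico.1 hn
            exact abs_truncatedPower_succ_sub_rpow_mul_rpow_le_of_ge hs hN h2N
        _ = 2 ^ |α| * (N / N) := by
            rw [sum_const, Nat.card_Ico, nsmul_eq_mul, show 2 * N - N = N by omega,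
              mul_div_left_comm]
        _ ≤ 2 ^ |α| := mul_le_of_le_one_right (by positivity) (div_self_le_one _)
  · intro n hn
    rw [mem_range, not_lt] at hn
    rw [truncatedPower_eq_zero (by omega), truncatedPower_eq_zero hn, sub_zero, abs_zero,
      Real.zero_rpow hp.ne', zero_mul]

end TruncatedPower

theorem stmt_17_general {p : ℝ} (hp : 0 < p) (α C : ℝ)
    (hHardy : ∀ u : ℕ → ℝ, (Function.support u).Finite → u 0 = 0 →
      ∑' n : ℕ, |u (n + 1) - u n| ^ p * ((n : ℝ) + 1) ^ α ≥
        C * ∑' n : ℕ, |u (n + 1)| ^ p * ((n : ℝ) + 1) ^ (α - p)) :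
    C ≤ |(p - 1 - α) / p| ^ p := by
  obtain hC | hC := le_or_gt C 0
  · exact hC.trans (by positivity)
  set s := -(1 + α) / p with hs_def
  have hs : s * p + α = -1 := by rw [hs_def]; field_simp; ring
  have hexp : (p - 1 - α) / p = s + 1 := by rw [hs_def]; field_simp; ring
  set H : ℕ → ℝ := fun N ↦ ∑ n ∈ range N, 1 / ((n : ℝ) + 1)
  set E : ℕ → ℝ := fun N ↦ ∑ n ∈ range N, |relPowerIncrement s n| ^ p * (1 / ((n : ℝ) + 1))
  have hH : Tendsto H atTop atTop := Real.tendsto_sum_range_one_div_nat_succ_atTop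
  have hbound (N : ℕ) : C * H N ≤ E N + 2 ^ |α| :=
    calc C * H N ≤ _ :=
          mul_le_mul_of_nonneg_left (harmonic_le_tsum_abs_truncatedPower_rpow hp hs N) hC.le
      _ ≤ _ := hHardy _ (finite_support_truncatedPower s N) (truncatedPower_zero_right s N)
      _ ≤ E N + 2 ^ |α| := tsum_abs_truncatedPower_sub_rpow_le hp hs N
  have hlim : Tendsto (fun N ↦ E N / H N + 2 ^ |α| / H N) atTop (𝓝 (|s + 1| ^ p + 0)) :=
    (tendsto_sum_relPowerIncrement_rpow_div_harmonic hp.le s).add (hH.const_div_atTop _)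
  rw [hexp, ← add_zero (|s + 1| ^ p)]
  refine ge_of_tendsto hlim ?_
  filter_upwards [hH.eventually_gt_atTop 0] with N hN
  rw [← add_div, le_div_iff₀ hN]
  exact hbound N

/-- Proposition 4.8 (upper bound): for `p > 1` and `α < 0`, any constant `C > 0` for which
the discrete weighted `p`-Hardy inequality holds satisfies `C ≤ ((p-1-α)/p)^p`, i.e. the
sharp discrete constant is at most the sharp continuous one. -/
theorem stmt_17 (p α : ℝ) (hp : 1 < p) (hα : α < 0)
    (C : ℝ) (hC : 0 < C)
    (hHardy : ∀ u : ℕ → ℝ, (Function.support u).Finite → u 0 = 0 →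
      ∑' n : ℕ, |u (n + 1) - u n| ^ p * ((n : ℝ) + 1) ^ α ≥
        C * ∑' n : ℕ, |u (n + 1)| ^ p * ((n : ℝ) + 1) ^ (α - p)) :
    C ≤ ((p - 1 - α) / p) ^ p := by
  have hexp : 0 ≤ (p - 1 - α) / p := div_nonneg (by linarith) (by linarith)
  simpa only [abs_of_nonneg hexp] using stmt_17_general (by linarith) α C hHardy
end
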